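/- Let X be a real vector space, Z a nonempty set, φ : Z × X → Z with φ(z,0) = z for all z, f : Z → EReal, x₀ ∈ X, z₀ ∈ Z and T ∈ ℕ. Then A^T f(z₀) = sup_{μ ∈ M^T(x₀)} μ[f(Z_T)], where for a path (x₀, x₁, …, x_T) ∈ X^{T+1} the state Z_T is obtained from Z₀ = z₀ and Z_{t+1} = φ(Z_t, x_{t+1} − x_t), and μ[f(Z_T)] is the finite sum of f(Z_T(path)) weighted by μ. -/

import Mathlib

/-- An `EReal`-valued function on a real vector space is concave
(with the convention `⊤ + ⊥ = ⊥` of `EReal`). -/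
def IsEConcave {X : Type*} [AddCommGroup X] [Module ℝ X] (ψ : X → EReal) : Prop :=
  ∀ x y : X, ∀ a b : ℝ, 0 ≤ a → 0 ≤ b → a + b = 1 →
    (a : EReal) * ψ x + (b : EReal) * ψ y ≤ ψ (a • x + b • y)

/-- The concave envelope `g^♯` of `g : X → EReal`: the pointwise infimum of all
concave functions dominating `g`. -/
noncomputable def concaveEnvelope {X : Type*} [AddCommGroup X] [Module ℝ X]
    (g : X → EReal) (x : X) : EReal :=
  ⨅ ψ : {ψ : X → EReal // IsEConcave ψ ∧ ∀ y, g y ≤ ψ y}, ψ.1 x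

/-- A finitely supported probability measure on `X^{T+1}` under which the coordinate
process is a martingale in its natural filtration, starting at `x₀`; an element of
`M^T(x₀)` (the law of a simple martingale `M₀, …, M_T` with `M₀ = x₀`).
The martingale property is expressed by testing the increment `π(t+1) - π(t)`
against all functions `h` of the path depending only on the first `t+1` coordinates. -/
structure MartLaw (X : Type*) [AddCommGroup X] [Module ℝ X] (T : ℕ) (x₀ : X) where
  supp : Finset (Fin (T + 1) → X)
  w : (Fin (T + 1) → X) → ℝ
  nonneg : ∀ π, 0 ≤ w π
  zero_off : ∀ π ∉ supp, w π = 0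
  total : ∑ π ∈ supp, w π = 1
  init : ∀ π ∈ supp, w π ≠ 0 → π 0 = x₀
  mart : ∀ t : Fin T, ∀ h : (Fin (T + 1) → X) → ℝ,
    (∀ π π' : Fin (T + 1) → X, (∀ s : Fin (T + 1), s ≤ t.castSucc → π s = π' s) → h π = h π') →
    ∑ π ∈ supp, (w π * h π) • (π t.succ - π t.castSucc) = 0

/-- The integral `μ[f]` of an `EReal`-valued function on path space under a finitely
supported martingale law, as a finite sum in `EReal`. -/
noncomputable def MartLaw.exp {X : Type*} [AddCommGroup X] [Module ℝ X] {T : ℕ} {x₀ : X}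
    (μ : MartLaw X T x₀) (f : (Fin (T + 1) → X) → EReal) : EReal :=
  ∑ π ∈ μ.supp, (μ.w π : EReal) * f π

/-- The operator `A`: `Ag(z) = (g ∘ φ(z,·))^♯(0)`. -/
noncomputable def Aop {X Z : Type*} [AddCommGroup X] [Module ℝ X]
    (φ : Z → X → Z) (g : Z → EReal) : Z → EReal :=
  fun z => concaveEnvelope (fun d => g (φ z d)) 0

/-- The state process: `Z₀ = z₀`, `Z_{t+1} = φ(Z_t, x_{t+1} - x_t)` along a path `π : ℕ → X`. -/
def stateProc {X Z : Type*} [AddCommGroup X] (φ : Z → X → Z) (z₀ : Z) (π : ℕ → X) : ℕ → Z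
  | 0 => z₀
  | t + 1 => φ (stateProc φ z₀ π t) (π (t + 1) - π t)

/-- Extension of a path `x₀, …, x_T` to a path indexed by `ℕ` (constant after time `T`). -/
def pathExt {X : Type*} {T : ℕ} (π : Fin (T + 1) → X) : ℕ → X :=
  fun s => if h : s ≤ T then π ⟨s, Nat.lt_succ_of_le h⟩ else π (Fin.last T)

/-!
The identity is dynamic programming. The envelope `g^♯(x)` is the supremum of the averages of `g`
over finitely supported laws with barycentre `x`, so `A` is the optimal value of a one-step game.
Appending to a martingale law an optimal centred increment given each past, and conversely
conditioning the last increment on the past and applying Jensen's inequality to the envelope,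
shows that one more time step of the martingale corresponds to one more application of `A`.
-/

section ERealSums

variable {ι : Type*}

theorem ereal_mul_sum (s : Finset ι) {a : EReal} (ha : 0 ≤ a) (ha' : a ≠ ⊤) (F : ι → EReal) :
    a * ∑ i ∈ s, F i = ∑ i ∈ s, a * F i := by
  classical
  induction s using Finset.induction_on with
  | empty => simp
  | insert i s hi ih =>
    rw [Finset.sum_insert hi, Finset.sum_insert hi,
      EReal.left_distrib_of_nonneg_of_ne_top ha ha', ih]

theorem ereal_coe_sum_mul (s : Finset ι) {w : ι → ℝ} (hw : ∀ i ∈ s, 0 ≤ w i) (c : EReal) :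
    ((∑ i ∈ s, w i : ℝ) : EReal) * c = ∑ i ∈ s, (w i : EReal) * c := by
  classical
  induction s using Finset.induction_on with
  | empty => simp
  | insert i s hi ih =>
    obtain ⟨hwi, hws⟩ := Finset.forall_mem_insert .. |>.1 hw
    rw [Finset.sum_insert hi, Finset.sum_insert hi, EReal.coe_add,
      EReal.right_distrib_of_nonneg (EReal.coe_nonneg.2 hwi)
        (EReal.coe_nonneg.2 (Finset.sum_nonneg hws)), ih hws]

theorem ereal_mul_iSup_le {κ : Sort*} [Nonempty κ] {a : ℝ} (ha : 0 ≤ a) (F : κ → EReal) :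
    (a : EReal) * ⨆ j, F j ≤ ⨆ j, (a : EReal) * F j := by
  rcases ha.eq_or_lt with rfl | ha
  · simp
  · have ha' : (0 : EReal) < a := EReal.coe_pos.2 ha
    rw [mul_comm, ← EReal.le_div_iff_mul_le ha' (EReal.coe_ne_top a)]
    refine iSup_le fun j => ?_
    rw [EReal.le_div_iff_mul_le ha' (EReal.coe_ne_top a), mul_comm]
    exact le_iSup (fun j => (a : EReal) * F j) j

theorem ereal_iSup_add_iSup_le {κ κ' : Sort*} {u : κ → EReal} {v : κ' → EReal} {c : EReal}
    (h : ∀ j k, u j + v k ≤ c) : (⨆ j, u j) + ⨆ k, v k ≤ c := by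
  refine EReal.add_le_of_forall_lt fun a ha b hb => ?_
  obtain ⟨j, hj⟩ := lt_iSup_iff.1 ha
  obtain ⟨k, hk⟩ := lt_iSup_iff.1 hb
  exact (add_le_add hj.le hk.le).trans (h j k)

theorem ereal_sum_iSup_le {κ : ι → Type*} [∀ i, Nonempty (κ i)] (s : Finset ι)
    (F : ∀ i, κ i → EReal) :
    ∑ i ∈ s, ⨆ j, F i j ≤ ⨆ v : ∀ i, κ i, ∑ i ∈ s, F i (v i) := by
  classical
  induction s using Finset.induction_on with
  | empty => simp
  | insert i s hi ih =>
    rw [Finset.sum_insert hi]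
    refine (add_le_add_right ih _).trans (ereal_iSup_add_iSup_le fun j v => ?_)
    refine le_iSup_of_le (Function.update v i j) (le_of_eq ?_)
    rw [Finset.sum_insert hi, Function.update_self]
    congr 1
    refine Finset.sum_congr rfl fun k hk => ?_
    rw [Function.update_of_ne (ne_of_mem_of_not_mem hk hi)]

end ERealSums

section ConcaveEnvelope

open Convexity

variable {X : Type*} [AddCommGroup X] [Module ℝ X]

-- With the total weight kept as a factor, both sides are `0` for `a = b = 0`, so that Jensen's
-- inequality follows by induction without excluding vanishing partial sums of the weights.
theorem IsEConcave.add_le {ψ : X → EReal} (hψ : IsEConcave ψ) {a b : ℝ} (ha : 0 ≤ a) (hb : 0 ≤ b)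
    (x y : X) :
    (a : EReal) * ψ x + (b : EReal) * ψ y ≤
      ((a + b : ℝ) : EReal) * ψ ((a + b)⁻¹ • (a • x + b • y)) := by
  rcases (add_nonneg ha hb).eq_or_lt with h | h
  · obtain ⟨rfl, rfl⟩ := (add_eq_zero_iff_of_nonneg ha hb).1 h.symm
    simp
  · have hc : (0 : EReal) ≤ ((a + b : ℝ) : EReal) := EReal.coe_nonneg.2 h.le
    have hconc := hψ x y ((a + b)⁻¹ * a) ((a + b)⁻¹ * b) (by positivity) (by positivity)
      (by field_simp)
    rw [mul_smul, mul_smul, ← smul_add] at hconc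
    refine le_of_eq_of_le ?_ (mul_le_mul_of_nonneg_left hconc hc)
    rw [EReal.left_distrib_of_nonneg_of_ne_top hc (EReal.coe_ne_top _), ← mul_assoc, ← mul_assoc,
      ← EReal.coe_mul, ← EReal.coe_mul, mul_inv_cancel_left₀ h.ne', mul_inv_cancel_left₀ h.ne']

theorem IsEConcave.sum_mul_le_centerMass {ψ : X → EReal} (hψ : IsEConcave ψ) {ι : Type*}
    (s : Finset ι) {w : ι → ℝ} (hw : ∀ i ∈ s, 0 ≤ w i) (d : ι → X) :
    ∑ i ∈ s, (w i : EReal) * ψ (d i) ≤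
      ((∑ i ∈ s, w i : ℝ) : EReal) * ψ (s.centerMass w d) := by
  classical
  induction s using Finset.induction_on with
  | empty => simp
  | insert i s hi ih =>
    obtain ⟨hwi, hws⟩ := Finset.forall_mem_insert .. |>.1 hw
    have hsum : (∑ j ∈ s, w j) • s.centerMass w d = ∑ j ∈ s, w j • d j := by
      rcases eq_or_ne (∑ j ∈ s, w j) 0 with h | h
      · rw [h, zero_smul, Finset.sum_eq_zero fun j hj => by
          rw [(Finset.sum_eq_zero_iff_of_nonneg hws).1 h j hj, zero_smul]]
      · rw [Finset.centerMass, smul_inv_smul₀ h]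
    calc ∑ j ∈ insert i s, (w j : EReal) * ψ (d j)
        = (w i : EReal) * ψ (d i) + ∑ j ∈ s, (w j : EReal) * ψ (d j) := Finset.sum_insert hi
      _ ≤ (w i : EReal) * ψ (d i) + ((∑ j ∈ s, w j : ℝ) : EReal) * ψ (s.centerMass w d) :=
        add_le_add_right (ih hws) _
      _ ≤ ((w i + ∑ j ∈ s, w j : ℝ) : EReal) *
            ψ ((w i + ∑ j ∈ s, w j)⁻¹ • (w i • d i + (∑ j ∈ s, w j) • s.centerMass w d)) :=
        hψ.add_le hwi (Finset.sum_nonneg hws) _ _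
      _ = ((∑ j ∈ insert i s, w j : ℝ) : EReal) * ψ ((insert i s).centerMass w d) := by
        rw [hsum, Finset.centerMass, Finset.sum_insert hi, Finset.sum_insert hi]

theorem le_concaveEnvelope (g : X → EReal) (x : X) : g x ≤ concaveEnvelope g x :=
  le_iInf fun ψ => ψ.2.2 x

theorem concaveEnvelope_le {g ψ : X → EReal} (hψ : IsEConcave ψ) (h : ∀ y, g y ≤ ψ y) (x : X) :
    concaveEnvelope g x ≤ ψ x :=
  iInf_le_of_le ⟨ψ, hψ, h⟩ le_rfl

theorem isEConcave_concaveEnvelope (g : X → EReal) : IsEConcave (concaveEnvelope g) := by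
  intro x y a b ha hb hab
  refine le_iInf fun ψ => (add_le_add ?_ ?_).trans (ψ.2.1 x y a b ha hb hab)
  · exact mul_le_mul_of_nonneg_left (concaveEnvelope_le ψ.2.1 ψ.2.2 x) (EReal.coe_nonneg.2 ha)
  · exact mul_le_mul_of_nonneg_left (concaveEnvelope_le ψ.2.1 ψ.2.2 y) (EReal.coe_nonneg.2 hb)

theorem sum_mul_le_concaveEnvelope_centerMass (g : X → EReal) {ι : Type*} (s : Finset ι)
    {w : ι → ℝ} (hw : ∀ i ∈ s, 0 ≤ w i) (d : ι → X) :
    ∑ i ∈ s, (w i : EReal) * g (d i) ≤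
      ((∑ i ∈ s, w i : ℝ) : EReal) * concaveEnvelope g (s.centerMass w d) :=
  (Finset.sum_le_sum fun i hi => mul_le_mul_of_nonneg_left (le_concaveEnvelope g (d i))
    (EReal.coe_nonneg.2 (hw i hi))).trans
    ((isEConcave_concaveEnvelope g).sum_mul_le_centerMass s hw d)

/-- A finitely supported probability measure on `X` with barycentre `x`: the law of one step of a
simple martingale from `x`. -/
structure BarycenterLaw (x : X) extends StdSimplex ℝ X where
  barycenter : weights.sum (fun y r => r • y) = x

namespace BarycenterLaw

variable {x y : X}

/-- The integral of an `EReal`-valued function under a finitely supported law, as a finite sum in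
`EReal`. -/
noncomputable def exp (q : BarycenterLaw x) (g : X → EReal) : EReal :=
  q.weights.sum fun y r => (r : EReal) * g y

/-- The point mass at `x`. -/
noncomputable def dirac (x : X) : BarycenterLaw x where
  toStdSimplex := .single x
  barycenter := by simp

instance : Nonempty (BarycenterLaw x) := ⟨dirac x⟩

theorem dirac_exp (x : X) (g : X → EReal) : (dirac x).exp g = g x := by
  simp [dirac, exp]

/-- The mixture of two laws with weights `a` and `b`. -/
noncomputable def mix (q : BarycenterLaw x) (r : BarycenterLaw y) {a b : ℝ} (ha : 0 ≤ a)
    (hb : 0 ≤ b) (hab : a + b = 1) : BarycenterLaw (a • x + b • y) where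
  toStdSimplex := convexCombPair a b ha hb hab q.toStdSimplex r.toStdSimplex
  barycenter := by
    have hq : Finsupp.linearCombination ℝ id q.weights = x := q.barycenter
    have hr : Finsupp.linearCombination ℝ id r.weights = y := r.barycenter
    change Finsupp.linearCombination ℝ id _ = _
    rw [StdSimplex.weights_convexCombPair, map_add, map_smul, map_smul, hq, hr]

theorem mix_exp (q : BarycenterLaw x) (r : BarycenterLaw y) {a b : ℝ} (ha : 0 ≤ a) (hb : 0 ≤ b)
    (hab : a + b = 1) (g : X → EReal) :
    (q.mix r ha hb hab).exp g = (a : EReal) * q.exp g + (b : EReal) * r.exp g := by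
  classical
  have hmix : (q.mix r ha hb hab).weights = a • q.weights + b • r.weights :=
    StdSimplex.weights_convexCombPair ..
  have hsub : (a • q.weights + b • r.weights).support ⊆ q.weights.support ∪ r.weights.support :=
    Finsupp.support_add.trans
      (Finset.union_subset_union Finsupp.support_smul Finsupp.support_smul)
  have ha' : (0 : EReal) ≤ a := EReal.coe_nonneg.2 ha
  have hb' : (0 : EReal) ≤ b := EReal.coe_nonneg.2 hb
  rw [exp, exp, exp, hmix, Finsupp.sum_of_support_subset _ hsub _ (by simp),
    Finsupp.sum_of_support_subset _ Finset.subset_union_left _ (by simp),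
    Finsupp.sum_of_support_subset _ Finset.subset_union_right _ (by simp),
    ereal_mul_sum _ ha' (EReal.coe_ne_top a), ereal_mul_sum _ hb' (EReal.coe_ne_top b),
    ← Finset.sum_add_distrib]
  refine Finset.sum_congr rfl fun z _ => ?_
  have hqz := EReal.coe_nonneg.2 (q.weights_nonneg z)
  have hrz := EReal.coe_nonneg.2 (r.weights_nonneg z)
  rw [Finsupp.add_apply, Finsupp.smul_apply, Finsupp.smul_apply, smul_eq_mul, smul_eq_mul,
    EReal.coe_add, EReal.coe_mul, EReal.coe_mul,
    EReal.right_distrib_of_nonneg (mul_nonneg ha' hqz) (mul_nonneg hb' hrz), mul_assoc, mul_assoc]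

theorem exp_le_concaveEnvelope (q : BarycenterLaw x) (g : X → EReal) :
    q.exp g ≤ concaveEnvelope g x := by
  have htotal : ∑ y ∈ q.weights.support, q.weights y = 1 := q.total
  have hcenter : q.weights.support.centerMass q.weights id = x := by
    rw [Finset.centerMass_eq_of_sum_1 _ _ htotal]
    exact q.barycenter
  have h := sum_mul_le_concaveEnvelope_centerMass g q.weights.support
    (fun y _ => q.weights_nonneg y) id
  rwa [htotal, hcenter, EReal.coe_one, one_mul] at h

end BarycenterLaw

theorem isEConcave_iSup_exp (g : X → EReal) :
    IsEConcave fun x => ⨆ q : BarycenterLaw x, q.exp g := by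
  intro x y a b ha hb hab
  refine (add_le_add (ereal_mul_iSup_le ha _) (ereal_mul_iSup_le hb _)).trans
    (ereal_iSup_add_iSup_le fun q r => ?_)
  rw [← q.mix_exp r ha hb hab]
  exact le_iSup (fun q => BarycenterLaw.exp q g) _

theorem concaveEnvelope_eq_iSup_exp (g : X → EReal) (x : X) :
    concaveEnvelope g x = ⨆ q : BarycenterLaw x, q.exp g := by
  refine le_antisymm (concaveEnvelope_le (isEConcave_iSup_exp g) (fun y => ?_) x)
    (iSup_le fun q => q.exp_le_concaveEnvelope g)
  exact le_iSup_of_le (BarycenterLaw.dirac y) (BarycenterLaw.dirac_exp y g).ge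

end ConcaveEnvelope

section AppendIncrement

variable {X : Type*} [AddCommGroup X] {T : ℕ}

/-- The increment `x_{T+1} - x_T` of the path `x₀, …, x_{T+1}`. -/
def lastIncrement (π : Fin (T + 2) → X) : X :=
  π (Fin.last T).succ - π (Fin.last T).castSucc

/-- The path `x₀, …, x_T, x_T + d` extending `x₀, …, x_T` by one increment. -/
def appendIncrement (π : Fin (T + 1) → X) (d : X) : Fin (T + 2) → X :=
  Fin.snoc (α := fun _ => X) π (π (Fin.last T) + d)

theorem appendIncrement_castSucc (π : Fin (T + 1) → X) (d : X) (s : Fin (T + 1)) :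
    appendIncrement π d s.castSucc = π s :=
  Fin.snoc_castSucc ..

theorem init_appendIncrement (π : Fin (T + 1) → X) (d : X) :
    Fin.init (appendIncrement π d) = π :=
  Fin.init_snoc ..

theorem lastIncrement_appendIncrement (π : Fin (T + 1) → X) (d : X) :
    lastIncrement (appendIncrement π d) = d := by
  simp [lastIncrement, appendIncrement, Fin.succ_last]

theorem appendIncrement_init_lastIncrement (π : Fin (T + 2) → X) :
    appendIncrement (Fin.init π) (lastIncrement π) = π := by
  simp [lastIncrement, appendIncrement, Fin.init]

theorem appendIncrement_congr {t : Fin (T + 1)} {π π' : Fin (T + 1) → X}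
    (h : ∀ s ≤ t, π s = π' s) (d d' : X) :
    ∀ s ≤ t.castSucc, appendIncrement π d s = appendIncrement π' d' s := by
  intro s hs
  obtain ⟨s, rfl⟩ := Fin.exists_castSucc_eq.2 (Fin.ne_last_of_lt (hs.trans_lt t.castSucc_lt_succ))
  rw [appendIncrement_castSucc, appendIncrement_castSucc, h s (Fin.castSucc_le_castSucc_iff.1 hs)]

/-- A path with one more increment, as a pair of a path and an increment. -/
def appendIncrementEmbedding : (Σ _ : Fin (T + 1) → X, X) ↪ (Fin (T + 2) → X) where
  toFun j := appendIncrement j.1 j.2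
  inj' := Function.LeftInverse.injective (g := fun π => ⟨Fin.init π, lastIncrement π⟩)
    fun j => by simp only [init_appendIncrement, lastIncrement_appendIncrement]

end AppendIncrement

namespace MartLaw

variable {X : Type*} [AddCommGroup X] [Module ℝ X] {T : ℕ} {x₀ : X}

instance : Nonempty (MartLaw X T x₀) :=
  ⟨{ supp := {fun _ => x₀}
     w := Set.indicator {fun _ => x₀} 1
     nonneg := fun _ => Set.indicator_nonneg (fun _ _ => zero_le_one) _
     zero_off := fun _ hπ => Set.indicator_of_notMem (by simpa using hπ) _
     total := by simp
     init := by simp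
     mart := by simp }⟩

theorem exp_const (μ : MartLaw X T x₀) (c : EReal) : μ.exp (fun _ => c) = c := by
  rw [exp, ← ereal_coe_sum_mul _ fun π _ => μ.nonneg π, μ.total, EReal.coe_one, one_mul]

section Extend

variable (μ : MartLaw X T x₀) (q : (Fin (T + 1) → X) → BarycenterLaw (0 : X))

/-- The support of `MartLaw.extend μ q`. -/
def extendSupp : Finset (Fin (T + 2) → X) :=
  (μ.supp.sigma fun π => (q π).weights.support).map appendIncrementEmbedding

/-- The weights of `MartLaw.extend μ q`. -/
def extendWeight (π : Fin (T + 2) → X) : ℝ :=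
  μ.w (Fin.init π) * (q (Fin.init π)).weights (lastIncrement π)

theorem extendWeight_appendIncrement (π : Fin (T + 1) → X) (d : X) :
    extendWeight μ q (appendIncrement π d) = μ.w π * (q π).weights d := by
  rw [extendWeight, init_appendIncrement, lastIncrement_appendIncrement]

theorem sum_extendSupp {M : Type*} [AddCommMonoid M] (F : (Fin (T + 2) → X) → M) :
    ∑ π ∈ extendSupp μ q, F π =
      ∑ π ∈ μ.supp, ∑ d ∈ (q π).weights.support, F (appendIncrement π d) := by
  rw [extendSupp, Finset.sum_map, Finset.sum_sigma]
  rfl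

theorem mem_extendSupp {π : Fin (T + 2) → X} (hπ : extendWeight μ q π ≠ 0) :
    π ∈ extendSupp μ q := by
  obtain ⟨hw, hq⟩ := mul_ne_zero_iff.1 hπ
  have hmem : Fin.init π ∈ μ.supp := not_imp_comm.1 (μ.zero_off _) hw
  rw [← appendIncrement_init_lastIncrement π]
  exact Finset.mem_map_of_mem appendIncrementEmbedding
    (a := (⟨Fin.init π, lastIncrement π⟩ : Σ _ : Fin (T + 1) → X, X))
    (Finset.mem_sigma.2 ⟨hmem, Finsupp.mem_support_iff.2 hq⟩)

theorem sum_extendWeight_smul {M : Type*} [AddCommGroup M] [Module ℝ M]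
    (F : (Fin (T + 1) → X) → M) :
    ∑ π ∈ extendSupp μ q, extendWeight μ q π • F (Fin.init π) = ∑ π ∈ μ.supp, μ.w π • F π := by
  rw [sum_extendSupp]
  refine Finset.sum_congr rfl fun π _ => ?_
  have htotal : ∑ d ∈ (q π).weights.support, (q π).weights d = 1 := (q π).total
  simp only [extendWeight_appendIncrement, init_appendIncrement]
  rw [← Finset.sum_smul, ← Finset.mul_sum, htotal, mul_one]

theorem sum_extendWeight_smul_lastIncrement (h : (Fin (T + 1) → X) → ℝ) :
    ∑ π ∈ extendSupp μ q, (extendWeight μ q π * h (Fin.init π)) • lastIncrement π = 0 := by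
  rw [sum_extendSupp]
  refine Finset.sum_eq_zero fun π _ => ?_
  have hbary : ∑ d ∈ (q π).weights.support, (q π).weights d • d = 0 := (q π).barycenter
  simp only [extendWeight_appendIncrement, init_appendIncrement, lastIncrement_appendIncrement,
    mul_right_comm _ _ (h π), mul_smul (μ.w π * h π)]
  rw [← Finset.smul_sum, hbary, smul_zero]

/-- The law of a martingale with law `μ` continued by one step whose increment has conditional law
`q π` given the past `π`. -/
def extend : MartLaw X (T + 1) x₀ where
  supp := extendSupp μ q
  w := extendWeight μ q
  nonneg π := mul_nonneg (μ.nonneg _) ((q _).weights_nonneg _)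
  zero_off π := not_imp_comm.1 (mem_extendSupp μ q)
  total := by simpa [μ.total] using sum_extendWeight_smul μ q fun _ => (1 : ℝ)
  init π _ hπ := by
    have hw := left_ne_zero_of_mul hπ
    exact μ.init _ (not_imp_comm.1 (μ.zero_off _) hw) hw
  mart t h hh := by
    have hpast (π : Fin (T + 2) → X) : h π = h (appendIncrement (Fin.init π) 0) := by
      conv_lhs => rw [← appendIncrement_init_lastIncrement π]
      exact hh _ _ (appendIncrement_congr (fun _ _ => rfl) _ _)
    induction t using Fin.lastCases with
    | last =>
      refine (Finset.sum_congr rfl fun π _ => ?_).trans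
        (sum_extendWeight_smul_lastIncrement μ q fun π => h (appendIncrement π 0))
      rw [hpast π]
      rfl
    | cast t =>
      refine (Finset.sum_congr rfl fun π _ => ?_).trans <|
        (sum_extendWeight_smul μ q fun π =>
          h (appendIncrement π 0) • (π t.succ - π t.castSucc)).trans ?_
      · rw [hpast π, mul_smul]
        rfl
      · simp only [← mul_smul]
        exact μ.mart t _ fun π π' hπ => hh _ _ (appendIncrement_congr hπ 0 0)

theorem extend_exp (G : (Fin (T + 1) → X) → X → EReal) :
    (μ.extend q).exp (fun π => G (Fin.init π) (lastIncrement π)) =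
      μ.exp fun π => (q π).exp (G π) := by
  refine (sum_extendSupp μ q _).trans (Finset.sum_congr rfl fun π _ => ?_)
  simp only [BarycenterLaw.exp, Finsupp.sum]
  rw [ereal_mul_sum _ (EReal.coe_nonneg.2 (μ.nonneg π)) (EReal.coe_ne_top _)]
  refine Finset.sum_congr rfl fun d _ => ?_
  change (extendWeight μ q _ : EReal) * _ = _
  rw [extendWeight_appendIncrement, init_appendIncrement, lastIncrement_appendIncrement,
    EReal.coe_mul, mul_assoc]

end Extend

section Truncate

open Classical in
/-- The law of `M₀, …, M_T` when `M₀, …, M_{T+1}` has law `ν`. -/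
noncomputable def truncate (ν : MartLaw X (T + 1) x₀) : MartLaw X T x₀ where
  supp := ν.supp.image Fin.init
  w π := ∑ π' ∈ ν.supp with Fin.init π' = π, ν.w π'
  nonneg π := Finset.sum_nonneg fun π' _ => ν.nonneg π'
  zero_off π hπ := Finset.sum_eq_zero fun π' hπ' => by
    obtain ⟨hmem, rfl⟩ := Finset.mem_filter.1 hπ'
    exact absurd (Finset.mem_image_of_mem _ hmem) hπ
  total := by
    rw [Finset.sum_fiberwise_of_maps_to fun π => Finset.mem_image_of_mem _, ν.total]
  init π _ hw := by
    obtain ⟨π', hπ', hw'⟩ := Finset.exists_ne_zero_of_sum_ne_zero hw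
    obtain ⟨hmem, rfl⟩ := Finset.mem_filter.1 hπ'
    exact ν.init π' hmem hw'
  mart t h hh := by
    have hmart := ν.mart t.castSucc (fun π => h (Fin.init π)) fun π π' hπ =>
      hh _ _ fun s hs => hπ s.castSucc (Fin.castSucc_le_castSucc_iff.2 hs)
    rw [← Finset.sum_fiberwise_of_maps_to fun π => Finset.mem_image_of_mem Fin.init] at hmart
    refine (Finset.sum_congr rfl fun π _ => ?_).trans hmart
    rw [Finset.sum_mul, Finset.sum_smul]
    refine Finset.sum_congr rfl fun π' hπ' => ?_
    obtain rfl := (Finset.mem_filter.1 hπ').2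
    rfl

open Classical in
theorem sum_fiber_smul_lastIncrement (ν : MartLaw X (T + 1) x₀) (π : Fin (T + 1) → X) :
    ∑ π' ∈ ν.supp with Fin.init π' = π, ν.w π' • lastIncrement π' = 0 := by
  have hmart := ν.mart (Fin.last T) (fun π' => if Fin.init π' = π then 1 else 0)
    fun π₁ π₂ h => by
      have hinit : (Fin.init π₁ : Fin (T + 1) → X) = Fin.init π₂ :=
        funext fun s => h s.castSucc (Fin.castSucc_le_castSucc_iff.2 (Fin.le_last s))
      rw [hinit]
  simp only [mul_ite, mul_one, mul_zero, ite_smul, zero_smul] at hmart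
  rwa [Finset.sum_filter]

theorem exp_lastIncrement_le_truncate_exp (ν : MartLaw X (T + 1) x₀)
    (G : (Fin (T + 1) → X) → X → EReal) :
    ν.exp (fun π => G (Fin.init π) (lastIncrement π)) ≤
      ν.truncate.exp fun π => concaveEnvelope (G π) 0 := by
  classical
  rw [exp, ← Finset.sum_fiberwise_of_maps_to fun π => Finset.mem_image_of_mem Fin.init]
  refine Finset.sum_le_sum fun π _ => ?_
  have hcenter : {π' ∈ ν.supp | Fin.init π' = π}.centerMass ν.w lastIncrement = 0 := by
    rw [Finset.centerMass, sum_fiber_smul_lastIncrement, smul_zero]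
  have hjensen := sum_mul_le_concaveEnvelope_centerMass (G π) {π' ∈ ν.supp | Fin.init π' = π}
    (fun π' _ => ν.nonneg π') lastIncrement
  rw [hcenter] at hjensen
  refine le_of_eq_of_le (Finset.sum_congr rfl fun π' hπ' => ?_) hjensen
  rw [(Finset.mem_filter.1 hπ').2]

end Truncate

theorem exp_concaveEnvelope_le_iSup (μ : MartLaw X T x₀) (G : (Fin (T + 1) → X) → X → EReal) :
    μ.exp (fun π => concaveEnvelope (G π) 0) ≤
      ⨆ ν : MartLaw X (T + 1) x₀, ν.exp fun π => G (Fin.init π) (lastIncrement π) :=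
  calc μ.exp (fun π => concaveEnvelope (G π) 0)
      = ∑ π ∈ μ.supp, (μ.w π : EReal) * ⨆ q : BarycenterLaw (0 : X), q.exp (G π) := by
        simp only [exp, concaveEnvelope_eq_iSup_exp]
    _ ≤ ∑ π ∈ μ.supp, ⨆ q : BarycenterLaw (0 : X), (μ.w π : EReal) * q.exp (G π) :=
        Finset.sum_le_sum fun π _ => ereal_mul_iSup_le (μ.nonneg π) _
    _ ≤ ⨆ q : (Fin (T + 1) → X) → BarycenterLaw (0 : X), μ.exp fun π => (q π).exp (G π) :=
        ereal_sum_iSup_le μ.supp fun π (q : BarycenterLaw (0 : X)) => μ.w π * q.exp (G π)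
    _ ≤ ⨆ ν : MartLaw X (T + 1) x₀, ν.exp fun π => G (Fin.init π) (lastIncrement π) :=
        iSup_le fun q => le_iSup_of_le (μ.extend q) (μ.extend_exp q G).ge

theorem iSup_exp_concaveEnvelope (G : (Fin (T + 1) → X) → X → EReal) :
    ⨆ μ : MartLaw X T x₀, μ.exp (fun π => concaveEnvelope (G π) 0) =
      ⨆ ν : MartLaw X (T + 1) x₀, ν.exp fun π => G (Fin.init π) (lastIncrement π) :=
  le_antisymm (iSup_le fun μ => μ.exp_concaveEnvelope_le_iSup G)
    (iSup_le fun ν => le_iSup_of_le ν.truncate (ν.exp_lastIncrement_le_truncate_exp G))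

end MartLaw

section StateProc

variable {X Z : Type*} [AddCommGroup X]

theorem stateProc_congr (φ : Z → X → Z) (z₀ : Z) {π π' : ℕ → X} {t : ℕ}
    (h : ∀ s ≤ t, π s = π' s) : stateProc φ z₀ π t = stateProc φ z₀ π' t := by
  induction t with
  | zero => rfl
  | succ t ih =>
    rw [stateProc, stateProc, ih fun s hs => h s (Nat.le_succ_of_le hs), h (t + 1) le_rfl,
      h t t.le_succ]

theorem stateProc_pathExt_succ (φ : Z → X → Z) (z₀ : Z) {T : ℕ} (π : Fin (T + 2) → X) :
    stateProc φ z₀ (pathExt π) (T + 1) =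
      φ (stateProc φ z₀ (pathExt (Fin.init π)) T) (lastIncrement π) := by
  have hinit : ∀ s ≤ T, pathExt π s = pathExt (Fin.init π) s := fun s hs => by
    rw [pathExt, pathExt, dif_pos (Nat.le_succ_of_le hs), dif_pos hs]
    rfl
  have hincr : pathExt π (T + 1) - pathExt π T = lastIncrement π := by
    rw [pathExt, pathExt, dif_pos le_rfl, dif_pos T.le_succ]
    rfl
  rw [stateProc, hincr, stateProc_congr φ z₀ hinit]

end StateProc

theorem Aop_iterate_eq_sup_martLaw_general {X Z : Type*} [AddCommGroup X] [Module ℝ X]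
    (φ : Z → X → Z) (f : Z → EReal) (x₀ : X) (z₀ : Z) (T : ℕ) :
    (Aop φ)^[T] f z₀ =
      ⨆ μ : MartLaw X T x₀, μ.exp fun π => f (stateProc φ z₀ (pathExt π) T) := by
  induction T generalizing f with
  | zero => simp only [Function.iterate_zero, id_eq, stateProc, MartLaw.exp_const, iSup_const]
  | succ T ih =>
    calc (Aop φ)^[T + 1] f z₀
        = ⨆ μ : MartLaw X T x₀, μ.exp fun π => Aop φ f (stateProc φ z₀ (pathExt π) T) := by
          rw [Function.iterate_succ_apply, ih]
      _ = ⨆ ν : MartLaw X (T + 1) x₀, ν.exp fun π =>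
            f (φ (stateProc φ z₀ (pathExt (Fin.init π)) T) (lastIncrement π)) :=
          MartLaw.iSup_exp_concaveEnvelope fun π d => f (φ (stateProc φ z₀ (pathExt π) T) d)
      _ = ⨆ ν : MartLaw X (T + 1) x₀, ν.exp fun π =>
            f (stateProc φ z₀ (pathExt π) (T + 1)) := by
          simp only [stateProc_pathExt_succ]

/-- `A^T f(z₀) = sup_{μ ∈ M^T(x₀)} μ[f(Z_T)]`, where `Z` is the state
process with `Z₀ = z₀`, `Z_{t+1} = φ(Z_t, x_{t+1} - x_t)` along the path. -/
theorem Aop_iterate_eq_sup_martLaw {X Z : Type*} [AddCommGroup X] [Module ℝ X] [Nonempty Z]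
    (φ : Z → X → Z) (hφ : ∀ z, φ z 0 = z) (f : Z → EReal)
    (x₀ : X) (z₀ : Z) (T : ℕ) :
    (Aop φ)^[T] f z₀ =
      ⨆ μ : MartLaw X T x₀, μ.exp fun π => f (stateProc φ z₀ (pathExt π) T) :=
  Aop_iterate_eq_sup_martLaw_general φ f x₀ z₀ T
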